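/- Suppose that for all p, q ≥ 0 the spaces H^{p,q}_BC, H^{p,q}_∂ and H^{p,q}_∂̄ are finite-dimensional with dim H^{p,q}_BC = dim H^{p,q}_∂ = dim H^{p,q}_∂̄, and that there exists N ∈ ℕ with A^{p,q} = 0 whenever p ≥ N and q ≥ N. Then for all p, q ≥ 0 the maps φ^{p,q}_- and φ^{p,q}_+ are isomorphisms, and the ∂∂̄-lemma holds on A^{p,q}, i.e. ker ∂̄ ∩ ∂(A^{p-1,q}) = ker ∂ ∩ ∂̄(A^{p,q-1}) = (∂∂̄)(A^{p-1,q-1}) as subspaces of A^{p,q}. -/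

import Mathlib

open Submodule LinearMap Module

section Setup

variable (A : ℤ → ℤ → Type*) [∀ p q, AddCommGroup (A p q)] [∀ p q, Module ℂ (A p q)]

/-- The identification `A p q → A p' q'` induced by equalities of the bidegrees. -/
def castA {p q p' q' : ℤ} (h : p = p') (h' : q = q') : A p q →ₗ[ℂ] A p' q' := by
  subst h; subst h'; exact LinearMap.id

variable (d : ∀ p q : ℤ, A p q →ₗ[ℂ] A (p + 1) q) (db : ∀ p q : ℤ, A p q →ₗ[ℂ] A p (q + 1))

/-- The composite `∂∂̄ : A^{p,q} → A^{p+1,q} → A^{p+1,q+1}`. -/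
def ddb (p q : ℤ) : A p q →ₗ[ℂ] A (p + 1) (q + 1) := (db (p + 1) q).comp (d p q)

/-- `ker ∂ ∩ A^{p,q}` -/
def kerd (p q : ℤ) : Submodule ℂ (A p q) := LinearMap.ker (d p q)

/-- `ker ∂̄ ∩ A^{p,q}` -/
def kerdb (p q : ℤ) : Submodule ℂ (A p q) := LinearMap.ker (db p q)

/-- `∂(A^{p-1,q})` -/
def imd (p q : ℤ) : Submodule ℂ (A p q) :=
  LinearMap.range ((castA A (show p - 1 + 1 = p by ring) rfl).comp (d (p - 1) q))

/-- `∂̄(A^{p,q-1})` -/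
def imdb (p q : ℤ) : Submodule ℂ (A p q) :=
  LinearMap.range ((castA A rfl (show q - 1 + 1 = q by ring)).comp (db p (q - 1)))

/-- `(∂∂̄)(A^{p-1,q-1})` -/
def imddb (p q : ℤ) : Submodule ℂ (A p q) :=
  LinearMap.range
    ((castA A (show p - 1 + 1 = p by ring) (show q - 1 + 1 = q by ring)).comp
      (ddb A d db (p - 1) (q - 1)))

end Setup

/-- The quotient of a submodule `p` by (the preimage in `p` of) a submodule `q`. -/
abbrev SubQuot {V : Type*} [AddCommGroup V] [Module ℂ V] (p q : Submodule ℂ V) :=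
  ↥p ⧸ q.comap p.subtype

/-- The map `p/q → p'/q'` induced by the identity (inclusion) on representatives. -/
def qmap {V : Type*} [AddCommGroup V] [Module ℂ V] {p p' q q' : Submodule ℂ V}
    (hp : p ≤ p') (hq : q ≤ q') : SubQuot p q →ₗ[ℂ] SubQuot p' q' :=
  Submodule.mapQ _ _ (Submodule.inclusion hp) fun x hx => by
    simp only [Submodule.mem_comap, Submodule.subtype_apply, Submodule.coe_inclusion] at hx ⊢
    exact hq hx

section Cohomology

variable (A : ℤ → ℤ → Type*) [∀ p q, AddCommGroup (A p q)] [∀ p q, Module ℂ (A p q)]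
variable (d : ∀ p q : ℤ, A p q →ₗ[ℂ] A (p + 1) q) (db : ∀ p q : ℤ, A p q →ₗ[ℂ] A p (q + 1))

/-- `H^{p,q}_∂ = (ker ∂ ∩ A^{p,q})/∂(A^{p-1,q})` -/
abbrev Hpqd (p q : ℤ) := SubQuot (kerd A d p q) (imd A d p q)

/-- `H^{p,q}_∂̄ = (ker ∂̄ ∩ A^{p,q})/∂̄(A^{p,q-1})` -/
abbrev Hpqdb (p q : ℤ) := SubQuot (kerdb A db p q) (imdb A db p q)

/-- `H^{p,q}_BC = (ker ∂ ∩ ker ∂̄ ∩ A^{p,q})/(∂∂̄)(A^{p-1,q-1})` -/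
abbrev HpqBC (p q : ℤ) := SubQuot (kerd A d p q ⊓ kerdb A db p q) (imddb A d db p q)

end Cohomology

section Lemmas

variable (A : ℤ → ℤ → Type*) [∀ p q, AddCommGroup (A p q)] [∀ p q, Module ℂ (A p q)]
variable (d : ∀ p q : ℤ, A p q →ₗ[ℂ] A (p + 1) q) (db : ∀ p q : ℤ, A p q →ₗ[ℂ] A p (q + 1))

lemma castA_castA {p q p' q' p'' q'' : ℤ} (h1 : p = p') (h2 : q = q') (h3 : p' = p'')
    (h4 : q' = q'') (x : A p q) :
    castA A h3 h4 (castA A h1 h2 x) = castA A (h1.trans h3) (h2.trans h4) x := by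
  subst h1; subst h2; subst h3; subst h4; rfl

lemma d_castA {p q p' q' : ℤ} (h : p = p') (h' : q = q') (x : A p q) :
    d p' q' (castA A h h' x) = castA A (show p + 1 = p' + 1 by rw [h]) h' (d p q x) := by
  subst h; subst h'; rfl

lemma db_castA {p q p' q' : ℤ} (h : p = p') (h' : q = q') (x : A p q) :
    db p' q' (castA A h h' x) = castA A h (show q + 1 = q' + 1 by rw [h']) (db p q x) := by
  subst h; subst h'; rfl

lemma imddb_le_imdb (p q : ℤ) : imddb A d db p q ≤ imdb A db p q := by
  rintro x ⟨y, rfl⟩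
  refine ⟨castA A (show p - 1 + 1 = p by ring) rfl (d (p - 1) (q - 1) y), ?_⟩
  simp only [LinearMap.comp_apply, ddb, db_castA, castA_castA]

lemma imddb_le_imd
    (hanti : ∀ p q : ℤ, (db (p + 1) q).comp (d p q) + (d p (q + 1)).comp (db p q) = 0)
    (p q : ℤ) : imddb A d db p q ≤ imd A d p q := by
  rintro x ⟨y, rfl⟩
  refine ⟨-(castA A rfl (show q - 1 + 1 = q by ring) (db (p - 1) (q - 1) y)), ?_⟩
  have h := DFunLike.congr_fun (hanti (p - 1) (q - 1)) y
  simp only [LinearMap.add_apply, LinearMap.comp_apply, LinearMap.zero_apply] at h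
  simp only [LinearMap.comp_apply, map_neg, d_castA, castA_castA, ddb]
  rw [eq_neg_of_add_eq_zero_left h, map_neg]

end Lemmas

section Phi

variable (A : ℤ → ℤ → Type*) [∀ p q, AddCommGroup (A p q)] [∀ p q, Module ℂ (A p q)]
variable (d : ∀ p q : ℤ, A p q →ₗ[ℂ] A (p + 1) q) (db : ∀ p q : ℤ, A p q →ₗ[ℂ] A p (q + 1))
variable (hanti : ∀ p q : ℤ, (db (p + 1) q).comp (d p q) + (d p (q + 1)).comp (db p q) = 0)

/-- `φ^{p,q}_+ : H^{p,q}_BC → H^{p,q}_∂`, induced by the identity on representatives. -/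
def phiPlus (p q : ℤ) : HpqBC A d db p q →ₗ[ℂ] Hpqd A d p q :=
  qmap inf_le_left (imddb_le_imd A d db hanti p q)

/-- `φ^{p,q}_- : H^{p,q}_BC → H^{p,q}_∂̄`, induced by the identity on representatives. -/
def phiMinus (p q : ℤ) : HpqBC A d db p q →ₗ[ℂ] Hpqdb A db p q :=
  qmap inf_le_right (imddb_le_imdb A d db p q)

end Phi

/-!
Injectivity of `φ_+` or `φ_-` says that `∂`-exact or `∂̄`-exact elements that are closed for both
differentials are `∂∂̄`-exact. If `φ_-` is injective in bidegree `(p, q + 1)` and `∂x = 0` with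
`x ∈ A^{p,q}`, then `∂̄x = ∂̄y` for some `∂`-exact `y`, so `x - y` is a Bott–Chern representative of
the `∂`-class of `x`; hence `φ_+` is surjective in bidegree `(p, q)`. The same holds with `∂` and
`∂̄` exchanged, and equality of the finite dimensions turns surjectivity back into injectivity.
Thus bijectivity of both maps descends along a staircase from `(p + 1, q + 1)` to `(p, q)`,
starting at a bidegree where the complex vanishes.
-/

theorem le_sup_ker_inf_of_map_le_map {R M N : Type*} [Ring R] [AddCommGroup M] [AddCommGroup N]
    [Module R M] [Module R N] (f : M →ₗ[R] N) {I K : Submodule R M} (hIK : I ≤ K)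
    (h : K.map f ≤ I.map f) : K ≤ I ⊔ ker f ⊓ K := by
  have hK : K ≤ I ⊔ ker f := comap_map_eq f I ▸ map_le_iff_le_comap.1 h
  rw [← sup_inf_assoc_of_le (ker f) hIK]
  exact le_inf hK le_rfl

theorem bijective_of_surjective_of_finrank_le {K V W : Type*} [DivisionRing K] [AddCommGroup V]
    [AddCommGroup W] [Module K V] [Module K W] [FiniteDimensional K V] {f : V →ₗ[K] W}
    (hf : Function.Surjective f) (h : finrank K V ≤ finrank K W) : Function.Bijective f :=
  have := Module.Finite.of_surjective f hf
  OrzechProperty.bijective_of_surjective_of_finrank_le f hf h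

section qmap

variable {V : Type*} [AddCommGroup V] [Module ℂ V] {p p' q q' : Submodule ℂ V}

theorem qmap_injective_iff (hp : p ≤ p') (hq : q ≤ q') :
    Function.Injective (qmap hp hq) ↔ p ⊓ q' ≤ q := by
  rw [← ker_eq_bot, qmap, ker_mapQ, eq_bot_iff, map_le_iff_le_comap, ← ker, ker_mkQ,
    ← comap_comp, subtype_comp_inclusion, comap_subtype_le_iff]
  simp

theorem qmap_surjective_of_le_sup (hp : p ≤ p') (hq : q ≤ q') (h : p' ≤ q' ⊔ p) :
    Function.Surjective (qmap hp hq) := by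
  intro c
  obtain ⟨⟨x, hx⟩, rfl⟩ := mkQ_surjective _ c
  obtain ⟨z, hz, y, hy, rfl⟩ := mem_sup.1 (h hx)
  refine ⟨mkQ _ ⟨y, hy⟩, (Submodule.Quotient.eq _).2 ?_⟩
  simpa using hz

end qmap

section DoubleComplex

variable {A : ℤ → ℤ → Type*} [∀ p q, AddCommGroup (A p q)] [∀ p q, Module ℂ (A p q)]
  {d : ∀ p q : ℤ, A p q →ₗ[ℂ] A (p + 1) q} {db : ∀ p q : ℤ, A p q →ₗ[ℂ] A p (q + 1)}

theorem imd_succ (p q : ℤ) : imd A d (p + 1) q = range (d p q) := by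
  have range_cast (r : ℤ) (h : r + 1 = p + 1) :
      range ((castA A h rfl).comp (d r q)) = range (d p q) := by
    obtain rfl := add_right_cancel h
    rfl
  exact range_cast _ _

theorem imdb_succ (p q : ℤ) : imdb A db p (q + 1) = range (db p q) := by
  have range_cast (s : ℤ) (h : s + 1 = q + 1) :
      range ((castA A rfl h).comp (db p s)) = range (db p q) := by
    obtain rfl := add_right_cancel h
    rfl
  exact range_cast _ _

theorem imddb_succ_succ (p q : ℤ) : imddb A d db (p + 1) (q + 1) = range (ddb A d db p q) := by
  have range_cast (r s : ℤ) (hr : r + 1 = p + 1) (hs : s + 1 = q + 1) :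
      range ((castA A hr hs).comp (ddb A d db r s)) = range (ddb A d db p q) := by
    obtain rfl := add_right_cancel hr
    obtain rfl := add_right_cancel hs
    rfl
  exact range_cast _ _ _ _

theorem imddb_succ_right (p q : ℤ) :
    imddb A d db p (q + 1) = (imd A d p q).map (db p q) := by
  obtain ⟨p, rfl⟩ : ∃ r, p = r + 1 := ⟨p - 1, by ring⟩
  rw [imddb_succ_succ, imd_succ, ← range_comp, ddb]

theorem imddb_succ_left
    (hanti : ∀ p q : ℤ, (db (p + 1) q).comp (d p q) + (d p (q + 1)).comp (db p q) = 0) (p q : ℤ) :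
    imddb A d db (p + 1) q = (imdb A db p q).map (d p q) := by
  obtain ⟨q, rfl⟩ : ∃ s, q = s + 1 := ⟨q - 1, by ring⟩
  rw [imddb_succ_succ, imdb_succ, ← range_comp, ddb, eq_neg_of_add_eq_zero_left (hanti p q),
    range_neg]

theorem imd_le_kerd (hd2 : ∀ p q : ℤ, (d (p + 1) q).comp (d p q) = 0) (p q : ℤ) :
    imd A d p q ≤ kerd A d p q := by
  obtain ⟨p, rfl⟩ : ∃ r, p = r + 1 := ⟨p - 1, by ring⟩
  exact imd_succ (d := d) p q ▸ range_le_ker_iff.2 (hd2 p q)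

theorem imdb_le_kerdb (hdb2 : ∀ p q : ℤ, (db p (q + 1)).comp (db p q) = 0) (p q : ℤ) :
    imdb A db p q ≤ kerdb A db p q := by
  obtain ⟨q, rfl⟩ : ∃ s, q = s + 1 := ⟨q - 1, by ring⟩
  exact imdb_succ (db := db) p q ▸ range_le_ker_iff.2 (hdb2 p q)

theorem map_db_kerd_le_kerd
    (hanti : ∀ p q : ℤ, (db (p + 1) q).comp (d p q) + (d p (q + 1)).comp (db p q) = 0) (p q : ℤ) :
    (kerd A d p q).map (db p q) ≤ kerd A d p (q + 1) := by
  rintro _ ⟨x, hx : d p q x = 0, rfl⟩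
  simpa [kerd, hx] using LinearMap.congr_fun (hanti p q) x

theorem map_d_kerdb_le_kerdb
    (hanti : ∀ p q : ℤ, (db (p + 1) q).comp (d p q) + (d p (q + 1)).comp (db p q) = 0) (p q : ℤ) :
    (kerdb A db p q).map (d p q) ≤ kerdb A db (p + 1) q := by
  rintro _ ⟨x, hx : db p q x = 0, rfl⟩
  simpa [kerdb, hx] using LinearMap.congr_fun (hanti p q) x

theorem phiMinus_injective_iff
    (hanti : ∀ p q : ℤ, (db (p + 1) q).comp (d p q) + (d p (q + 1)).comp (db p q) = 0)
    (hd2 : ∀ p q : ℤ, (d (p + 1) q).comp (d p q) = 0)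
    (hdb2 : ∀ p q : ℤ, (db p (q + 1)).comp (db p q) = 0) (p q : ℤ) :
    Function.Injective (phiMinus A d db p q) ↔
      kerd A d p q ⊓ imdb A db p q = imddb A d db p q := by
  have himddb : imddb A d db p q ≤ kerd A d p q ⊓ imdb A db p q :=
    le_inf ((imddb_le_imd A d db hanti p q).trans (imd_le_kerd hd2 p q))
      (imddb_le_imdb A d db p q)
  rw [phiMinus, qmap_injective_iff, inf_assoc, inf_eq_right.2 (imdb_le_kerdb hdb2 p q),
    le_antisymm_iff, and_iff_left himddb]

variable (hanti : ∀ p q : ℤ, (db (p + 1) q).comp (d p q) + (d p (q + 1)).comp (db p q) = 0)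

theorem phiPlus_injective_iff (hd2 : ∀ p q : ℤ, (d (p + 1) q).comp (d p q) = 0)
    (hdb2 : ∀ p q : ℤ, (db p (q + 1)).comp (db p q) = 0) (p q : ℤ) :
    Function.Injective (phiPlus A d db hanti p q) ↔
      kerdb A db p q ⊓ imd A d p q = imddb A d db p q := by
  have himddb : imddb A d db p q ≤ kerdb A db p q ⊓ imd A d p q :=
    le_inf ((imddb_le_imdb A d db p q).trans (imdb_le_kerdb hdb2 p q))
      (imddb_le_imd A d db hanti p q)
  rw [phiPlus, qmap_injective_iff, inf_assoc,
    inf_eq_right.2 (inf_le_right.trans (imd_le_kerd hd2 p q)), le_antisymm_iff,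
    and_iff_left himddb]

theorem phiPlus_surjective_of_phiMinus_injective
    (hd2 : ∀ p q : ℤ, (d (p + 1) q).comp (d p q) = 0)
    (hdb2 : ∀ p q : ℤ, (db p (q + 1)).comp (db p q) = 0) {p q : ℤ}
    (h : Function.Injective (phiMinus A d db p (q + 1))) :
    Function.Surjective (phiPlus A d db hanti p q) := by
  have hmap : (kerd A d p q).map (db p q) ≤ (imd A d p q).map (db p q) := by
    rw [← imddb_succ_right, ← (phiMinus_injective_iff hanti hd2 hdb2 p (q + 1)).1 h, imdb_succ]
    exact le_inf (map_db_kerd_le_kerd hanti p q) map_le_range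
  refine qmap_surjective_of_le_sup _ _ ?_
  rw [inf_comm]
  exact le_sup_ker_inf_of_map_le_map (db p q) (imd_le_kerd hd2 p q) hmap

theorem phiMinus_surjective_of_phiPlus_injective
    (hd2 : ∀ p q : ℤ, (d (p + 1) q).comp (d p q) = 0)
    (hdb2 : ∀ p q : ℤ, (db p (q + 1)).comp (db p q) = 0) {p q : ℤ}
    (h : Function.Injective (phiPlus A d db hanti (p + 1) q)) :
    Function.Surjective (phiMinus A d db p q) := by
  have hmap : (kerdb A db p q).map (d p q) ≤ (imdb A db p q).map (d p q) := by
    rw [← imddb_succ_left hanti, ← (phiPlus_injective_iff hanti hd2 hdb2 (p + 1) q).1 h, imd_succ]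
    exact le_inf (map_d_kerdb_le_kerdb hanti p q) map_le_range
  exact qmap_surjective_of_le_sup _ _
    (le_sup_ker_inf_of_map_le_map (d p q) (imdb_le_kerdb hdb2 p q) hmap)

theorem phiMinus_phiPlus_bijective_of_subsingleton
    (hd2 : ∀ p q : ℤ, (d (p + 1) q).comp (d p q) = 0)
    (hdb2 : ∀ p q : ℤ, (db p (q + 1)).comp (db p q) = 0) (p q : ℤ)
    (hfin : ∀ r s : ℤ, p ≤ r → q ≤ s → FiniteDimensional ℂ (HpqBC A d db r s))
    (hdim : ∀ r s : ℤ, p ≤ r → q ≤ s →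
      finrank ℂ (HpqBC A d db r s) ≤ finrank ℂ (Hpqd A d r s) ∧
      finrank ℂ (HpqBC A d db r s) ≤ finrank ℂ (Hpqdb A db r s))
    (n : ℕ) (hn : Subsingleton (A (p + n) (q + n))) :
    Function.Bijective (phiMinus A d db p q) ∧
      Function.Bijective (phiPlus A d db hanti p q) := by
  induction n generalizing p q with
  | zero =>
    rw [Nat.cast_zero, add_zero, add_zero] at hn
    exact ⟨⟨Function.injective_of_subsingleton _, Function.surjective_to_subsingleton _⟩,
      ⟨Function.injective_of_subsingleton _, Function.surjective_to_subsingleton _⟩⟩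
  | succ n ih =>
    have plus_bijective {r s : ℤ} (hr : p ≤ r) (hs : q ≤ s)
        (h : Function.Injective (phiMinus A d db r (s + 1))) :
        Function.Bijective (phiPlus A d db hanti r s) :=
      have := hfin r s hr hs
      bijective_of_surjective_of_finrank_le
        (phiPlus_surjective_of_phiMinus_injective hanti hd2 hdb2 h) (hdim r s hr hs).1
    have minus_bijective {r s : ℤ} (hr : p ≤ r) (hs : q ≤ s)
        (h : Function.Injective (phiPlus A d db hanti (r + 1) s)) :
        Function.Bijective (phiMinus A d db r s) :=
      have := hfin r s hr hs
      bijective_of_surjective_of_finrank_le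
        (phiMinus_surjective_of_phiPlus_injective hanti hd2 hdb2 h) (hdim r s hr hs).2
    have hp : p ≤ p + 1 := by lia
    have hq : q ≤ q + 1 := by lia
    rw [Nat.cast_succ, add_comm (n : ℤ), ← add_assoc, ← add_assoc] at hn
    obtain ⟨hminus, hplus⟩ := ih (p + 1) (q + 1)
      (fun r s hr hs => hfin r s (hp.trans hr) (hq.trans hs))
      (fun r s hr hs => hdim r s (hp.trans hr) (hq.trans hs)) hn
    exact ⟨minus_bijective le_rfl le_rfl (plus_bijective hp le_rfl hminus.1).1,
      plus_bijective le_rfl le_rfl (minus_bijective le_rfl hq hplus.1).1⟩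

theorem equal_dims_implies_ddbar_lemma_general
    (hd2 : ∀ p q : ℤ, (d (p + 1) q).comp (d p q) = 0)
    (hdb2 : ∀ p q : ℤ, (db p (q + 1)).comp (db p q) = 0) (p q : ℤ)
    (hfin : ∀ r s : ℤ, p ≤ r → q ≤ s → FiniteDimensional ℂ (HpqBC A d db r s))
    (hdim : ∀ r s : ℤ, p ≤ r → q ≤ s →
      finrank ℂ (HpqBC A d db r s) ≤ finrank ℂ (Hpqd A d r s) ∧
      finrank ℂ (HpqBC A d db r s) ≤ finrank ℂ (Hpqdb A db r s))
    (n : ℕ) (hn : Subsingleton (A (p + n) (q + n))) :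
    Function.Bijective (phiMinus A d db p q) ∧
      Function.Bijective (phiPlus A d db hanti p q) ∧
      kerdb A db p q ⊓ imd A d p q = imddb A d db p q ∧
      kerd A d p q ⊓ imdb A db p q = imddb A d db p q := by
  obtain ⟨hminus, hplus⟩ :=
    phiMinus_phiPlus_bijective_of_subsingleton hanti hd2 hdb2 p q hfin hdim n hn
  exact ⟨hminus, hplus, (phiPlus_injective_iff hanti hd2 hdb2 p q).1 hplus.1,
    (phiMinus_injective_iff hanti hd2 hdb2 p q).1 hminus.1⟩

end DoubleComplex

/-- if all the Bott-Chern, `∂`- and `∂̄`-cohomologies have the same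
(finite) dimension and the double complex vanishes for large bidegrees, then all the
maps `φ^{p,q}_±` are isomorphisms and the `∂∂̄`-lemma holds on every `A^{p,q}`. -/
theorem equal_dims_implies_ddbar_lemma
    (A : ℤ → ℤ → Type*) [∀ p q, AddCommGroup (A p q)] [∀ p q, Module ℂ (A p q)]
    (hA0 : ∀ p q : ℤ, p < 0 ∨ q < 0 → ∀ x : A p q, x = 0)
    (d : ∀ p q : ℤ, A p q →ₗ[ℂ] A (p + 1) q) (db : ∀ p q : ℤ, A p q →ₗ[ℂ] A p (q + 1))
    (hd2 : ∀ p q : ℤ, (d (p + 1) q).comp (d p q) = 0)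
    (hdb2 : ∀ p q : ℤ, (db p (q + 1)).comp (db p q) = 0)
    (hanti : ∀ p q : ℤ, (db (p + 1) q).comp (d p q) + (d p (q + 1)).comp (db p q) = 0)
    (hfinBC : ∀ p q : ℤ, 0 ≤ p → 0 ≤ q → FiniteDimensional ℂ (HpqBC A d db p q))
    (hfind : ∀ p q : ℤ, 0 ≤ p → 0 ≤ q → FiniteDimensional ℂ (Hpqd A d p q))
    (hfindb : ∀ p q : ℤ, 0 ≤ p → 0 ≤ q → FiniteDimensional ℂ (Hpqdb A db p q))
    (hdim : ∀ p q : ℤ, 0 ≤ p → 0 ≤ q →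
      finrank ℂ (HpqBC A d db p q) = finrank ℂ (Hpqd A d p q) ∧
      finrank ℂ (HpqBC A d db p q) = finrank ℂ (Hpqdb A db p q))
    (N : ℕ) (hN : ∀ p q : ℤ, (N : ℤ) ≤ p → (N : ℤ) ≤ q → ∀ x : A p q, x = 0) :
    ∀ p q : ℤ, 0 ≤ p → 0 ≤ q →
      Function.Bijective ⇑(phiMinus A d db p q) ∧
      Function.Bijective ⇑(phiPlus A d db hanti p q) ∧
      kerdb A db p q ⊓ imd A d p q = imddb A d db p q ∧
      kerd A d p q ⊓ imdb A db p q = imddb A d db p q := by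
  intro p q hp hq
  exact equal_dims_implies_ddbar_lemma_general hanti hd2 hdb2 p q
    (fun r s hr hs => hfinBC r s (hp.trans hr) (hq.trans hs))
    (fun r s hr hs => (hdim r s (hp.trans hr) (hq.trans hs)).imp le_of_eq le_of_eq)
    N (subsingleton_of_forall_eq 0 (hN _ _ (by lia) (by lia)))
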